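/- For every n ≥ 0, the n-th Stirling coefficient γ_n satisfies γ_n = Σ_{k=0}^{2n} ((−1)^n 2^n Γ(n+k+1/2)/√π) Σ_{j=0}^k (2^j/(k−j)!) Σ_{i=0}^j ((−1)^i s(2n+j+i, i)/((j−i)! (2n+j+i)!)). -/

import Mathlib

open Finset

/-- The unsigned Stirling numbers of the first kind. -/
def stirling1 : ℕ → ℕ → ℕ
  | 0, 0 => 1
  | 0, _ + 1 => 0
  | _ + 1, 0 => 0
  | n + 1, j + 1 => stirling1 n j + n * stirling1 n (j + 1)

/-- Generalized binomial coefficient `C(ρ, k) = ρ(ρ-1)⋯(ρ-k+1)/k!` for real `ρ`. -/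
noncomputable def gbinomR (ρ : ℝ) (k : ℕ) : ℝ :=
  (∏ i ∈ Finset.range k, (ρ - i)) / (Nat.factorial k : ℝ)

/-- The formal power series `F(x) = 2(x - log(1+x))/x² = ∑_{m≥0} 2(-1)^m x^m/(m+2)`. -/
noncomputable def F : PowerSeries ℝ :=
  PowerSeries.mk fun m => 2 * (-1 : ℝ) ^ m / ((m : ℝ) + 2)

/-- For real `ρ`, the formal power series `F^ρ := ∑_{k≥0} C(ρ,k) (F-1)^k`; since `F - 1`
has zero constant term, the coefficient of `x^n` only involves `k ≤ n`. -/
noncomputable def Fpow (ρ : ℝ) : PowerSeries ℝ :=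
  PowerSeries.mk fun n =>
    ∑ k ∈ Finset.range (n + 1), gbinomR ρ k * PowerSeries.coeff n ((F - 1) ^ k)

/-- The `n`-th Stirling coefficient:
`γ_n = ((-1)^n (2n)!/(2^n n!)) · [x^{2n}] F^{-(n+1/2)}`. -/
noncomputable def stirlingCoeff (n : ℕ) : ℝ :=
  ((-1 : ℝ) ^ n * (Nat.factorial (2 * n) : ℝ) / (2 ^ n * (Nat.factorial n : ℝ))) *
    PowerSeries.coeff (2 * n) (Fpow (-((n : ℝ) + 1 / 2)))

/-!
Since `F = 2 (X - log (1 + X)) / X ^ 2`, expanding `F ^ j` binomially expresses its coefficients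
through those of `log (1 + X) ^ i / i!`, the exponential generating function of the signed Stirling
numbers of the first kind. A second binomial expansion passes from `F ^ j` to `(F - 1) ^ k`. The
Gamma factors come from `C(-s, k) = (-1) ^ k Γ(s + k) / (k! Γ(s))` at `s = n + 1/2`, whose
denominator `Γ(s)` cancels against the normalisation
`(2n)! / (2 ^ n n!) = 2 ^ n Γ(n + 1/2) / √π` of `γ_n`.
-/

section PowerSeries

open PowerSeries

lemma coeff_X_mul_derivative {R : Type*} [CommSemiring R] (f : R⟦X⟧) (m : ℕ) :
    coeff m (X * d⁄dX R f) = m * coeff m f := by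
  cases m with
  | zero => simp
  | succ m => rw [coeff_succ_X_mul, coeff_derivative, mul_comm, Nat.cast_succ]

section CommRing

variable {R : Type*} [CommRing R]

lemma coeff_add_X_sub_pow (f : R⟦X⟧) (N j : ℕ) :
    coeff (N + j) ((X - f) ^ j) =
      ∑ i ∈ range (j + 1), (-1) ^ i * j.choose i * coeff (N + i) (f ^ i) := by
  rw [sub_eq_neg_add, add_pow, map_sum]
  refine sum_congr rfl fun i hi => ?_
  obtain ⟨d, rfl⟩ := Nat.exists_eq_add_of_le (mem_range_succ_iff.mp hi)
  have hterm : (-f) ^ i * X ^ (i + d - i) * ((i + d).choose i : R⟦X⟧) =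
      C ((-1) ^ i * ((i + d).choose i : R)) * (X ^ d * f ^ i) := by
    rw [neg_pow, Nat.add_sub_cancel_left, map_mul, map_pow, map_neg, map_one, map_natCast]
    ring
  rw [hterm, coeff_C_mul, ← add_assoc, coeff_X_pow_mul]

lemma coeff_sub_one_pow (f : R⟦X⟧) (N k : ℕ) :
    coeff N ((f - 1) ^ k) =
      ∑ j ∈ range (k + 1), (-1) ^ (j + k) * k.choose j * coeff N (f ^ j) := by
  rw [sub_pow, map_sum]
  refine sum_congr rfl fun j _ => ?_
  have hterm : (-1) ^ (j + k) * f ^ j * 1 ^ (k - j) * (k.choose j : R⟦X⟧) =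
      C ((-1) ^ (j + k) * (k.choose j : R)) * f ^ j := by
    rw [one_pow, map_mul, map_pow, map_neg, map_one, map_natCast]
    ring
  rw [hterm, coeff_C_mul]

end CommRing

section Log

variable {A : Type*} [CommRing A] [Algebra ℚ A]

lemma one_add_X_mul_derivative_log : (1 + X) * d⁄dX A (log A) = 1 := by
  ext m
  rw [deriv_log, add_mul, one_mul, map_add, coeff_mk]
  cases m with
  | zero => simp
  | succ m => simp [coeff_succ_X_mul, pow_succ, coeff_one]

lemma one_add_X_mul_derivative_log_pow_succ (i : ℕ) :
    (1 + X) * d⁄dX A (log A ^ (i + 1)) = ((i + 1 : ℕ) : A⟦X⟧) * log A ^ i := by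
  rw [derivative_pow, Nat.add_sub_cancel]
  linear_combination ((i + 1 : ℕ) : A⟦X⟧) * log A ^ i * one_add_X_mul_derivative_log (A := A)

lemma succ_mul_coeff_succ_log_pow_succ (m i : ℕ) :
    (m + 1) * coeff (m + 1) (log A ^ (i + 1)) =
      (i + 1) * coeff m (log A ^ i) - m * coeff m (log A ^ (i + 1)) := by
  have h := congrArg (coeff m) (one_add_X_mul_derivative_log_pow_succ (A := A) i)
  rw [add_mul, one_mul, map_add, coeff_derivative, coeff_X_mul_derivative, ← map_natCast C,
    coeff_C_mul, Nat.cast_succ] at h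
  linear_combination h

lemma factorial_mul_coeff_log_pow (m i : ℕ) :
    (m.factorial : A) * coeff m (log A ^ i) =
      (-1) ^ (m + i) * i.factorial * m.stirlingFirst i := by
  induction m generalizing i with
  | zero => cases i <;> simp
  | succ m ih =>
    cases i with
    | zero => simp [coeff_one]
    | succ i =>
      have hrec := succ_mul_coeff_succ_log_pow_succ (A := A) m i
      have hi := ih i
      have hi' := ih (i + 1)
      rw [Nat.factorial_succ i] at hi' ⊢
      rw [Nat.factorial_succ m, Nat.stirlingFirst_succ_succ]
      push_cast at hi' ⊢
      linear_combination (m.factorial : A) * hrec + (i + 1 : A) * hi - (m : A) * hi'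

end Log

lemma stirling1_eq_stirlingFirst (n j : ℕ) : stirling1 n j = n.stirlingFirst j := by
  induction n generalizing j with
  | zero => cases j <;> rfl
  | succ n ih =>
    cases j with
    | zero => rfl
    | succ j => rw [stirling1, ih, ih, Nat.stirlingFirst_succ_succ, add_comm]

lemma coeff_log_pow (m i : ℕ) :
    coeff m (log ℝ ^ i) = (-1) ^ (m + i) * i.factorial * stirling1 m i / m.factorial := by
  rw [stirling1_eq_stirlingFirst, eq_div_iff (by positivity), mul_comm, factorial_mul_coeff_log_pow]

lemma X_sq_mul_F : X ^ 2 * F = C 2 * (X - log ℝ) := by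
  ext m
  rw [coeff_C_mul, map_sub, coeff_X_pow_mul', coeff_X, coeff_log]
  rcases m with _ | _ | m
  · simp
  · simp
  · rw [if_pos (Nat.le_add_left 2 m), show m + 1 + 1 - 2 = m from rfl, F, coeff_mk,
      if_neg (by lia), if_neg (by lia), eq_ratCast]
    push_cast
    ring

lemma coeff_F_pow_eq_coeff_X_sub_log_pow (N j : ℕ) :
    coeff N (F ^ j) = 2 ^ j * coeff (N + j + j) ((X - log ℝ) ^ j) := by
  rw [← coeff_C_mul, map_pow C, ← mul_pow, ← X_sq_mul_F, mul_pow, ← pow_mul, add_assoc, ← two_mul,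
    coeff_X_pow_mul]

lemma coeff_F_pow (N j : ℕ) :
    coeff N (F ^ j) = (-1 : ℝ) ^ (N + j) * 2 ^ j * j.factorial *
      ∑ i ∈ range (j + 1), (-1 : ℝ) ^ i * stirling1 (N + j + i) i /
        ((j - i).factorial * (N + j + i).factorial) := by
  rw [coeff_F_pow_eq_coeff_X_sub_log_pow, coeff_add_X_sub_pow, mul_sum, mul_sum]
  refine sum_congr rfl fun i hi => ?_
  have hsign : (-1 : ℝ) ^ (N + j + i + i) = (-1) ^ (N + j) := by
    rw [add_assoc, pow_add _ (N + j), Even.neg_one_pow ⟨i, rfl⟩, mul_one]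
  rw [coeff_log_pow, hsign, Nat.cast_choose ℝ (mem_range_succ_iff.mp hi)]
  field_simp

lemma coeff_F_sub_one_pow (N k : ℕ) :
    coeff N ((F - 1) ^ k) = (-1 : ℝ) ^ (N + k) * k.factorial *
      ∑ j ∈ range (k + 1), (2 : ℝ) ^ j / (k - j).factorial *
        ∑ i ∈ range (j + 1), (-1 : ℝ) ^ i * stirling1 (N + j + i) i /
          ((j - i).factorial * (N + j + i).factorial) := by
  rw [coeff_sub_one_pow, mul_sum]
  refine sum_congr rfl fun j hj => ?_
  have hsign : (-1 : ℝ) ^ (j + k) * (-1) ^ (N + j) = (-1) ^ (N + k) := by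
    rw [← pow_add, show j + k + (N + j) = N + k + (j + j) by ring, pow_add,
      Even.neg_one_pow ⟨j, rfl⟩, mul_one]
  rw [coeff_F_pow, Nat.cast_choose ℝ (mem_range_succ_iff.mp hj), ← hsign]
  field_simp

end PowerSeries

lemma gbinomR_succ (ρ : ℝ) (k : ℕ) : gbinomR ρ (k + 1) = gbinomR ρ k * (ρ - k) / (k + 1) := by
  rw [gbinomR, gbinomR, prod_range_succ, Nat.factorial_succ]
  push_cast
  field_simp

lemma gbinomR_neg {s : ℝ} (hs : ∀ i : ℕ, s ≠ -i) (k : ℕ) :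
    gbinomR (-s) k = (-1) ^ k * Real.Gamma (s + k) / (k.factorial * Real.Gamma s) := by
  have hΓ : Real.Gamma s ≠ 0 := Real.Gamma_ne_zero hs
  induction k with
  | zero => simp [gbinomR, hΓ]
  | succ k ih =>
    have hsk : s + k ≠ 0 := fun h => hs k (eq_neg_of_add_eq_zero_left h)
    rw [gbinomR_succ, ih, Nat.factorial_succ, Nat.cast_succ, ← add_assoc, Real.Gamma_add_one hsk]
    push_cast
    field_simp
    ring

lemma factorial_two_mul_div_eq_Gamma (n : ℕ) :
    ((2 * n).factorial : ℝ) / (2 ^ n * n.factorial) =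
      2 ^ n * Real.Gamma (n + 1 / 2) / √Real.pi := by
  have hfac : (2 * n).factorial = (2 * n - 1).doubleFactorial * (2 ^ n * n.factorial) := by
    cases n with
    | zero => rfl
    | succ n =>
      rw [← Nat.doubleFactorial_two_mul, mul_comm (Nat.doubleFactorial _)]
      exact Nat.factorial_eq_mul_doubleFactorial (2 * n + 1)
  rw [Real.Gamma_nat_add_half, hfac]
  push_cast
  field_simp

lemma factorial_two_mul_div_mul_gbinomR_neg (n k : ℕ) :
    ((2 * n).factorial : ℝ) / (2 ^ n * n.factorial) * gbinomR (-(n + 1 / 2)) k =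
      (-1) ^ k * (2 ^ n * Real.Gamma (n + k + 1 / 2) / √Real.pi) / k.factorial := by
  have hne (i : ℕ) : (n : ℝ) + 1 / 2 ≠ -i := by
    have : (0 : ℝ) < n + 1 / 2 + i := by positivity
    linarith
  have := Real.Gamma_ne_zero hne
  rw [factorial_two_mul_div_eq_Gamma, gbinomR_neg hne, add_right_comm (n : ℝ)]
  field_simp

/-- Representation of the Stirling coefficients in terms of the unsigned Stirling numbers
of the first kind (the formula of López, Pagola and Pérez Sinusía). -/
theorem stirlingCoeff_eq_triple_sum_stirling1 (n : ℕ) :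
    stirlingCoeff n =
      ∑ k ∈ Finset.range (2 * n + 1),
        ((-1 : ℝ) ^ n * 2 ^ n * Real.Gamma ((n : ℝ) + k + 1 / 2) / Real.sqrt Real.pi) *
          ∑ j ∈ Finset.range (k + 1),
            (2 : ℝ) ^ j / (Nat.factorial (k - j) : ℝ) *
              ∑ i ∈ Finset.range (j + 1),
                (-1 : ℝ) ^ i * (stirling1 (2 * n + j + i) i : ℝ) /
                  ((Nat.factorial (j - i) : ℝ) * (Nat.factorial (2 * n + j + i) : ℝ)) := by
  rw [stirlingCoeff, Fpow, PowerSeries.coeff_mk, mul_sum]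
  refine sum_congr rfl fun k _ => ?_
  have hsign : (-1 : ℝ) ^ k * (-1) ^ (2 * n + k) = 1 := by
    rw [← pow_add, Even.neg_one_pow ⟨n + k, by ring⟩]
  rw [mul_div_assoc, mul_assoc, ← mul_assoc (_ / _), factorial_two_mul_div_mul_gbinomR_neg,
    coeff_F_sub_one_pow]
  generalize (∑ j ∈ range (k + 1), _ : ℝ) = S
  calc
    _ = (-1) ^ k * (-1) ^ (2 * n + k) *
          ((-1) ^ n * 2 ^ n * Real.Gamma (n + k + 1 / 2) / √Real.pi * S) := by
      field_simp
    _ = _ := by rw [hsign, one_mul]
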